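/- Strict monotonicity of the critical density of ρ-percolation: let q̄ := sup{q ∈ [0,1] : ρ_c(q) < 1}. For all 0 ≤ q < q' ≤ q̄ one has ρ_c(q') − ρ_c(q) ≥ (1 − ρ_c(q))·(q' − q)/(1 − q); in particular, q ↦ ρ_c(q) is strictly increasing on [0, q̄]. -/

import Mathlib

open MeasureTheory Filter ENNReal

/-- Site-percolation configurations on `ℤ^d`: a site is open iff its value is `true`. -/
abbrev ConfigD (d : ℕ) := (Fin d → ℤ) → Bool

/-- `P` is the i.i.d. Bernoulli(`p`) product measure on `{0,1}^ι`: it is a probability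
measure whose cylinder events have the correct product probabilities. -/
def IsBernoulli {ι : Type*} (p : ℝ) (P : Measure (ι → Bool)) : Prop :=
  IsProbabilityMeasure P ∧
    ∀ (s : Finset ι) (f : ι → Bool),
      P {ω | ∀ x ∈ s, ω x = f x} =
        ∏ x ∈ s, (if f x then ENNReal.ofReal p else ENNReal.ofReal (1 - p))

/-- An oriented nearest-neighbour path in `ℤ^d` started at the origin: every step adds
one standard basis vector. -/
def IsOrientedPath {d : ℕ} (x : ℕ → Fin d → ℤ) : Prop :=
  x 0 = 0 ∧ ∀ n : ℕ, ∃ i : Fin d, x (n + 1) = x n + Pi.single i 1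

/-- The event that `ρ`-percolation occurs: some oriented nearest-neighbour path started at
the origin satisfies `liminf_n (1/n) ∑_{i=1}^n 1_{x̄ᵢ closed} ≥ ρ`. -/
def RhoPerc {d : ℕ} (ρ : ℝ) : Set (ConfigD d) :=
  {ω | ∃ x : ℕ → Fin d → ℤ, IsOrientedPath x ∧
    ρ ≤ atTop.liminf fun n : ℕ =>
      (∑ i ∈ Finset.Icc 1 n, if ω (x i) then (0 : ℝ) else 1) / n}

/-- `ρ_c(q) = sup {ρ | P_{1−q}(ρ-percolation occurs) = 1}`, where `P p` is the
Bernoulli(`p`) product measure on `{0,1}^{ℤ^d}`. -/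
noncomputable def rhoC {d : ℕ} (P : ℝ → Measure (ConfigD d)) (q : ℝ) : ℝ :=
  sSup {ρ : ℝ | P (1 - q) (RhoPerc ρ) = 1}

/-- `q̄ = sup {q ∈ [0,1] | ρ_c(q) < 1}`. -/
noncomputable def qbar {d : ℕ} (P : ℝ → Measure (ConfigD d)) : ℝ :=
  sSup {q : ℝ | q ∈ Set.Icc (0 : ℝ) 1 ∧ rhoC P q < 1}

section Bernoulli

variable {ι : Type*}

theorem measurableSet_eval_true (x : ι) : MeasurableSet {ω : ι → Bool | ω x = true} :=
  measurableSet_eq_fun (measurable_pi_apply x) measurable_const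

theorem measurableSet_forall_true (s : Finset ι) :
    MeasurableSet {ω : ι → Bool | ∀ x ∈ s, ω x = true} := by
  have : {ω : ι → Bool | ∀ x ∈ s, ω x = true} = ⋂ x ∈ s, {ω | ω x = true} := by
    ext; simp
  rw [this]
  exact s.measurableSet_biInter fun x _ => measurableSet_eval_true x

theorem measurable_and_config :
    Measurable fun (z : (ι → Bool) × (ι → Bool)) x => z.1 x && z.2 x := by
  refine measurable_pi_lambda _ fun x => ?_
  have h : Measurable fun z : (ι → Bool) × (ι → Bool) => (z.1 x, z.2 x) := by fun_prop
  exact (measurable_of_finite fun b : Bool × Bool => b.1 && b.2).comp h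

/-- A probability measure on `ι → Bool` is determined by the probabilities that all coordinates
in a finite set are `true`. -/
theorem measure_ext_of_forall_true {μ ν : Measure (ι → Bool)} [IsProbabilityMeasure μ]
    [IsProbabilityMeasure ν]
    (h : ∀ s : Finset ι, μ {ω | ∀ x ∈ s, ω x = true} = ν {ω | ∀ x ∈ s, ω x = true}) :
    μ = ν := by
  classical
  refine ext_of_generate_finite
    (Set.range fun s : Finset ι => {ω : ι → Bool | ∀ x ∈ s, ω x = true}) ?_ ?_ ?_ (by simp)
  · apply le_antisymm
    · refine iSup_le fun x => ?_
      rw [← measurable_iff_comap_le]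
      refine @measurable_to_bool _ (MeasurableSpace.generateFrom _) _ ?_
      apply MeasurableSpace.measurableSet_generateFrom
      exact ⟨{x}, by ext; simp⟩
    · refine MeasurableSpace.generateFrom_le ?_
      rintro _ ⟨s, rfl⟩
      exact measurableSet_forall_true s
  · rintro _ ⟨s, rfl⟩ _ ⟨t, rfl⟩ _
    refine ⟨s ∪ t, ?_⟩
    ext ω
    simp only [Finset.mem_union, Set.mem_ofPred_eq, Set.mem_inter_iff]
    grind
  · rintro _ ⟨s, rfl⟩
    exact h s

theorem IsBernoulli.measure_forall_true {p : ℝ} {P : Measure (ι → Bool)} (h : IsBernoulli p P)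
    (s : Finset ι) : P {ω | ∀ x ∈ s, ω x = true} = ENNReal.ofReal p ^ s.card := by
  simpa using h.2 s fun _ => true

/-- The sitewise conjunction of independent Bernoulli fields is a Bernoulli field. -/
theorem IsBernoulli.map_and {p r : ℝ} {μ ν ξ : Measure (ι → Bool)} (hp : 0 ≤ p)
    (hμ : IsBernoulli p μ) (hν : IsBernoulli r ν) (hξ : IsBernoulli (p * r) ξ) :
    (μ.prod ν).map (fun z x => z.1 x && z.2 x) = ξ := by
  have := hμ.1
  have := hν.1
  have := hξ.1
  have hmeas := measurable_and_config (ι := ι)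
  have := Measure.isProbabilityMeasure_map (μ := μ.prod ν) hmeas.aemeasurable
  refine measure_ext_of_forall_true fun s => ?_
  rw [Measure.map_apply hmeas (measurableSet_forall_true s), hξ.measure_forall_true]
  have : (fun (z : (ι → Bool) × (ι → Bool)) x => z.1 x && z.2 x) ⁻¹'
      {ω : ι → Bool | ∀ x ∈ s, ω x = true} =
      {ω : ι → Bool | ∀ x ∈ s, ω x = true} ×ˢ {ω : ι → Bool | ∀ x ∈ s, ω x = true} := by
    ext z
    simp only [Set.mem_preimage, Set.mem_ofPred_eq, Set.mem_prod, Bool.and_eq_true]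
    grind
  rw [this, Measure.prod_prod, hμ.measure_forall_true, hν.measure_forall_true,
    ENNReal.ofReal_mul hp, mul_pow]

theorem IsBernoulli.measure_eval_true {p : ℝ} {P : Measure (ι → Bool)} (h : IsBernoulli p P)
    (x : ι) : P {ω | ω x = true} = ENNReal.ofReal p := by
  simpa using h.measure_forall_true {x}

theorem IsBernoulli.eq_infinitePi {p : ℝ} {P : Measure (ι → Bool)} (h : IsBernoulli p P) :
    P = Measure.infinitePi fun x => P.map fun ω => ω x := by
  have := h.1
  have (x : ι) : IsProbabilityMeasure (P.map fun ω : ι → Bool => ω x) :=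
    Measure.isProbabilityMeasure_map (measurable_pi_apply x).aemeasurable
  refine measure_ext_of_forall_true fun s => ?_
  have hs : {ω : ι → Bool | ∀ x ∈ s, ω x = true} = Set.pi s fun _ => {true} := by
    ext; simp [Set.mem_pi]
  rw [h.measure_forall_true, hs, Measure.infinitePi_pi _ fun _ _ => measurableSet_singleton _]
  have hx (x : ι) : (P.map fun ω => ω x) {true} = ENNReal.ofReal p := by
    rw [Measure.map_apply (measurable_pi_apply x) (measurableSet_singleton _)]
    exact h.measure_eval_true x
  simp [hx]

theorem IsBernoulli.integral_eval {p : ℝ} {P : Measure (ι → Bool)} (hp : 0 ≤ p)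
    (h : IsBernoulli p P) (x : ι) : ∫ ω, (if ω x then (1 : ℝ) else 0) ∂P = p := by
  have : (fun ω : ι → Bool => if ω x then (1 : ℝ) else 0) =
      Set.indicator {ω | ω x = true} 1 := by
    ext ω; simp [Set.indicator_apply]
  rw [this, integral_indicator_one (measurableSet_eval_true x), Measure.real, h.measure_eval_true,
    ENNReal.toReal_ofReal hp]

/-- One-sided law of large numbers for a Bernoulli field sampled along distinct sites with
weights in `[0, 1]`. -/
theorem IsBernoulli.ae_eventually_sum_lt {r : ℝ} {ν : Measure (ι → Bool)} (hr : 0 ≤ r)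
    (hν : IsBernoulli r ν) {x : ℕ → ι} (hx : Function.Injective x) {a : ι → ℝ}
    (ha : ∀ z, a z ∈ Set.Icc (0 : ℝ) 1) {ε : ℝ} (hε : 0 < ε) :
    ∀ᵐ η ∂ν, ∀ᶠ n : ℕ in atTop,
      ∑ i ∈ Finset.Icc 1 n, a (x i) * (if η (x i) then (1 : ℝ) else 0) <
        r * ∑ i ∈ Finset.Icc 1 n, a (x i) + n * ε := by
  have := hν.1
  have (z : ι) : IsProbabilityMeasure (ν.map fun ω : ι → Bool => ω z) :=
    Measure.isProbabilityMeasure_map (measurable_pi_apply z).aemeasurable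
  have hindep : ProbabilityTheory.iIndepFun
      (fun z (η : ι → Bool) => a z * (if η z then (1 : ℝ) else 0) - r * a z) ν := by
    rw [hν.eq_infinitePi]
    exact ProbabilityTheory.iIndepFun_infinitePi
      (X := fun z (b : Bool) => a z * (if b then (1 : ℝ) else 0) - r * a z)
      fun z => measurable_of_finite _
  have hsub (z : ι) : ProbabilityTheory.HasSubgaussianMGF
      (fun η : ι → Bool => a z * (if η z then (1 : ℝ) else 0) - r * a z)
      ((‖(1 : ℝ) - 0‖₊ / 2) ^ 2) ν := by
    have hint : ∫ η, a z * (if η z then (1 : ℝ) else 0) ∂ν = r * a z := by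
      rw [integral_const_mul, hν.integral_eval hr, mul_comm]
    rw [← hint]
    refine ProbabilityTheory.hasSubgaussianMGF_of_mem_Icc ?_ (ae_of_all _ fun η => ?_)
    · exact ((measurable_of_finite fun b : Bool => a z * (if b then (1 : ℝ) else 0)).comp
        (measurable_pi_apply z)).aemeasurable
    · obtain ⟨h0, h1⟩ := ha z
      split_ifs <;> simp [h0, h1]
  have htail (n : ℕ) : ν {η | n * ε ≤ ∑ i ∈ Finset.Icc 1 n,
      (a (x i) * (if η (x i) then (1 : ℝ) else 0) - r * a (x i))} ≤
      ENNReal.ofReal (Real.exp (-(2 * ε ^ 2)) ^ n) := by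
    have h := ProbabilityTheory.HasSubgaussianMGF.measure_sum_ge_le_of_iIndepFun
      (hindep.precomp hx) (s := Finset.Icc 1 n) (fun i _ => hsub (x i))
      (ε := n * ε) (by positivity)
    rw [← ofReal_measureReal]
    refine ENNReal.ofReal_le_ofReal (h.trans (le_of_eq ?_))
    rw [← Real.exp_nat_mul]
    congr 1
    rcases n.eq_zero_or_pos with rfl | hn
    · simp
    · have : (n : ℝ) ≠ 0 := by positivity
      simp
      field_simp
  have hsum : ∑' n : ℕ, ν {η | n * ε ≤ ∑ i ∈ Finset.Icc 1 n,
      (a (x i) * (if η (x i) then (1 : ℝ) else 0) - r * a (x i))} ≠ ∞ := by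
    refine ne_top_of_le_ne_top ?_ (ENNReal.tsum_le_tsum htail)
    refine Summable.tsum_ofReal_ne_top ?_
    refine summable_geometric_of_lt_one (Real.exp_pos _).le ?_
    rw [Real.exp_lt_one_iff]
    have := pow_pos hε 2
    linarith
  filter_upwards [ae_eventually_notMem hsum] with η hη
  filter_upwards [hη] with n hn
  simp only [not_le, Finset.sum_sub_distrib, ← Finset.mul_sum] at hn
  linarith

end Bernoulli

section Density

variable {d : ℕ}

theorem IsOrientedPath.sum_coord {x : ℕ → Fin d → ℤ} (hx : IsOrientedPath x) (n : ℕ) :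
    ∑ i, x n i = n := by
  induction n with
  | zero => simp [hx.1]
  | succ n ih =>
    obtain ⟨i, hi⟩ := hx.2 n
    simp [hi, Finset.sum_add_distrib, ih]

theorem IsOrientedPath.injective {x : ℕ → Fin d → ℤ} (hx : IsOrientedPath x) :
    Function.Injective x := by
  intro m n h
  have hm := hx.sum_coord m
  rw [h, hx.sum_coord n] at hm
  exact_mod_cast hm.symm

theorem closed_density_mem_Icc (ω : ConfigD d) (x : ℕ → Fin d → ℤ) (n : ℕ) :
    (∑ i ∈ Finset.Icc 1 n, if ω (x i) then (0 : ℝ) else 1) / n ∈ Set.Icc (0 : ℝ) 1 := by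
  have h0 : 0 ≤ ∑ i ∈ Finset.Icc 1 n, if ω (x i) then (0 : ℝ) else 1 :=
    Finset.sum_nonneg fun i _ => by split_ifs <;> norm_num
  have h1 : (∑ i ∈ Finset.Icc 1 n, if ω (x i) then (0 : ℝ) else 1) ≤ n := by
    calc _ ≤ ∑ i ∈ Finset.Icc 1 n, (1 : ℝ) :=
          Finset.sum_le_sum fun i _ => by split_ifs <;> norm_num
      _ = n := by simp
  exact ⟨by positivity, div_le_one_of_le₀ h1 (Nat.cast_nonneg n)⟩

theorem isBoundedUnder_ge_closed_density (ω : ConfigD d) (x : ℕ → Fin d → ℤ) :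
    atTop.IsBoundedUnder (· ≥ ·) fun n : ℕ =>
      (∑ i ∈ Finset.Icc 1 n, if ω (x i) then (0 : ℝ) else 1) / n :=
  isBoundedUnder_of ⟨0, fun n => (closed_density_mem_Icc ω x n).1⟩

theorem isCoboundedUnder_ge_closed_density (ω : ConfigD d) (x : ℕ → Fin d → ℤ) :
    atTop.IsCoboundedUnder (· ≥ ·) fun n : ℕ =>
      (∑ i ∈ Finset.Icc 1 n, if ω (x i) then (0 : ℝ) else 1) / n :=
  IsBoundedUnder.isCoboundedUnder_ge
    (isBoundedUnder_of ⟨1, fun n => (closed_density_mem_Icc ω x n).2⟩)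

/-- If the thinning field `η` is open on asymptotically at most a proportion `r` of the sites of
the path `x` that are open in `ω`, then `x` keeps closed density at least `1 - r + r * ρ`. -/
theorem le_liminf_closed_density_and {r ρ : ℝ} (hr : 0 ≤ r) {ω η : ConfigD d}
    {x : ℕ → Fin d → ℤ}
    (hρ : ρ ≤ atTop.liminf fun n : ℕ =>
      (∑ i ∈ Finset.Icc 1 n, if ω (x i) then (0 : ℝ) else 1) / n)
    (hη : ∀ ε : ℝ, 0 < ε → ∀ᶠ n : ℕ in atTop,
      ∑ i ∈ Finset.Icc 1 n, (if ω (x i) then (1 : ℝ) else 0) * (if η (x i) then (1 : ℝ) else 0) <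
        r * ∑ i ∈ Finset.Icc 1 n, (if ω (x i) then (1 : ℝ) else 0) + n * ε) :
    1 - r + r * ρ ≤ atTop.liminf fun n : ℕ =>
      (∑ i ∈ Finset.Icc 1 n, if (ω (x i) && η (x i)) then (0 : ℝ) else 1) / n := by
  refine le_of_forall_pos_le_add fun ε hε => ?_
  rw [← sub_le_iff_le_add]
  refine le_liminf_of_le (isCoboundedUnder_ge_closed_density (fun z => ω z && η z) x) ?_
  have hδ : 0 < ε / (2 * (r + 1)) := by positivity
  filter_upwards [hη (ε / 2) (half_pos hε), eventually_gt_atTop 0, eventually_lt_of_lt_liminf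
    ((sub_lt_self ρ hδ).trans_le hρ) (isBoundedUnder_ge_closed_density ω x)] with n h1 hn h2
  have hn' : (0 : ℝ) < n := by exact_mod_cast hn
  rw [lt_div_iff₀ hn'] at h2
  rw [le_div_iff₀ hn']
  have hopen : ∑ i ∈ Finset.Icc 1 n, (if ω (x i) then (1 : ℝ) else 0) =
      n - ∑ i ∈ Finset.Icc 1 n, (if ω (x i) then (0 : ℝ) else 1) := by
    rw [eq_sub_iff_add_eq, ← Finset.sum_add_distrib, Finset.sum_congr rfl (g := fun _ => (1 : ℝ))
      fun i _ => by split_ifs <;> norm_num]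
    simp
  have hthin : ∑ i ∈ Finset.Icc 1 n, (if (ω (x i) && η (x i)) then (0 : ℝ) else 1) =
      n - ∑ i ∈ Finset.Icc 1 n,
        (if ω (x i) then (1 : ℝ) else 0) * (if η (x i) then (1 : ℝ) else 0) := by
    rw [eq_sub_iff_add_eq, ← Finset.sum_add_distrib, Finset.sum_congr rfl (g := fun _ => (1 : ℝ))
      fun i _ => by cases ω (x i) <;> cases η (x i) <;> norm_num]
    simp
  rw [hopen] at h1
  rw [hthin]
  have hrδ : r * (ε / (2 * (r + 1))) ≤ ε / 2 := by
    rw [← mul_div_assoc, div_le_div_iff₀ (by positivity) (by positivity)]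
    nlinarith
  have h3 := mul_le_mul_of_nonneg_left h2.le hr
  have h4 := mul_le_mul_of_nonneg_right hrδ hn'.le
  generalize ε / (2 * (r + 1)) = δ at h3 h4
  linarith

/-- Thinning the open sites of a configuration with `ρ`-percolation by an independent
Bernoulli(`r`) field almost surely produces `(1 - r + r * ρ)`-percolation. -/
theorem ae_and_mem_rhoPerc {r ρ : ℝ} (hr : 0 ≤ r) {ν : Measure (ConfigD d)}
    (hν : IsBernoulli r ν) {ω : ConfigD d} (hω : ω ∈ RhoPerc ρ) :
    ∀ᵐ η ∂ν, (fun x => ω x && η x) ∈ RhoPerc (d := d) (1 - r + r * ρ) := by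
  obtain ⟨x, hx, hρ⟩ := hω
  have hlln (k : ℕ) := hν.ae_eventually_sum_lt hr hx.injective
    (a := fun z => if ω z then (1 : ℝ) else 0)
    (fun z => by split_ifs <;> simp) (Nat.one_div_pos_of_nat (α := ℝ) (n := k))
  filter_upwards [ae_all_iff.2 hlln] with η hη
  refine ⟨x, hx, le_liminf_closed_density_and hr hρ fun ε hε => ?_⟩
  obtain ⟨k, hk⟩ := exists_nat_one_div_lt hε
  filter_upwards [hη k] with n hn
  exact hn.trans_le (by gcongr)

theorem rhoPerc_zero (hd : 1 ≤ d) : RhoPerc (d := d) 0 = Set.univ := by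
  refine Set.eq_univ_of_forall fun ω => ?_
  refine ⟨fun n => Pi.single ⟨0, hd⟩ (n : ℤ), ⟨by simp, fun n => ⟨⟨0, hd⟩, ?_⟩⟩, ?_⟩
  · rw [← Pi.single_add]
    push_cast
    rfl
  · exact le_liminf_of_le (isCoboundedUnder_ge_closed_density ω _)
      (Eventually.of_forall fun n => (closed_density_mem_Icc ω _ n).1)

theorem le_one_of_mem_rhoPerc {ρ : ℝ} {ω : ConfigD d} (hω : ω ∈ RhoPerc ρ) : ρ ≤ 1 := by
  obtain ⟨x, -, hρ⟩ := hω
  refine hρ.trans (liminf_le_of_le (isBoundedUnder_ge_closed_density ω x) fun b hb => ?_)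
  obtain ⟨n, hn⟩ := hb.exists
  exact hn.trans (closed_density_mem_Icc ω x n).2

theorem le_one_of_measure_rhoPerc {ρ : ℝ} {μ : Measure (ConfigD d)} (h : μ (RhoPerc ρ) = 1) :
    ρ ≤ 1 := by
  obtain ⟨ω, hω⟩ := nonempty_of_measure_ne_zero (h.trans_ne one_ne_zero)
  exact le_one_of_mem_rhoPerc hω

/-- If `ρ`-percolation has full outer measure at parameter `p`, then
`(1 - r + r * ρ)`-percolation has full outer measure at parameter `p * r`. -/
theorem measure_rhoPerc_of_thinning {p r ρ : ℝ} (hp : 0 ≤ p) (hr : 0 ≤ r)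
    {μ ν ξ : Measure (ConfigD d)} (hμ : IsBernoulli p μ) (hν : IsBernoulli r ν)
    (hξ : IsBernoulli (p * r) ξ) (h : μ (RhoPerc ρ) = 1) :
    ξ (RhoPerc (1 - r + r * ρ)) = 1 := by
  have := hμ.1
  have := hν.1
  have := hξ.1
  set f : ConfigD d × ConfigD d → ConfigD d := fun z x => z.1 x && z.2 x
  have hf : Measurable f := measurable_and_config
  set M := toMeasurable ξ (RhoPerc (d := d) (1 - r + r * ρ)) with hM_def
  have hM : MeasurableSet M := measurableSet_toMeasurable _ _
  have hfM : MeasurableSet (f ⁻¹' M) := hf hM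
  have hsection : Measurable fun ω => ν (Prod.mk ω ⁻¹' (f ⁻¹' M)) :=
    measurable_measure_prodMk_left hfM
  have hsub : RhoPerc ρ ⊆ {ω | ν (Prod.mk ω ⁻¹' (f ⁻¹' M)) = 1} := by
    intro ω hω
    refine (prob_compl_eq_zero_iff (measurable_prodMk_left hfM)).1 ?_
    filter_upwards [ae_and_mem_rhoPerc hr hν hω] with η hη
    exact subset_toMeasurable _ _ hη
  have hfull : μ {ω | ν (Prod.mk ω ⁻¹' (f ⁻¹' M)) = 1} = 1 :=
    le_antisymm prob_le_one (h.symm.trans_le (measure_mono hsub))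
  have hae : ∀ᵐ ω ∂μ, ν (Prod.mk ω ⁻¹' (f ⁻¹' M)) = 1 :=
    (prob_compl_eq_zero_iff (hsection (measurableSet_singleton 1))).2 hfull
  rw [← measure_toMeasurable, ← hM_def, ← hμ.map_and hp hν hξ, Measure.map_apply hf hM,
    Measure.prod_apply hfM, lintegral_congr_ae hae]
  simp

theorem bddAbove_rhoPerc (P : ℝ → Measure (ConfigD d)) (q : ℝ) :
    BddAbove {ρ : ℝ | P (1 - q) (RhoPerc ρ) = 1} :=
  ⟨1, fun _ hρ => le_one_of_measure_rhoPerc hρ⟩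

theorem rhoC_le_one (P : ℝ → Measure (ConfigD d)) (q : ℝ) : rhoC P q ≤ 1 :=
  Real.sSup_le (fun _ hρ => le_one_of_measure_rhoPerc hρ) zero_le_one

theorem rhoC_sub_ge (hd : 1 ≤ d) (P : ℝ → Measure (ConfigD d))
    (hP : ∀ p ∈ Set.Icc (0 : ℝ) 1, IsBernoulli p (P p)) {q q' : ℝ} (hq : 0 ≤ q) (hqq' : q < q')
    (hq' : q' ≤ 1) : (1 - rhoC P q) * (q' - q) / (1 - q) ≤ rhoC P q' - rhoC P q := by
  have h1q : 0 < 1 - q := by linarith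
  set r := (1 - q') / (1 - q) with hr_def
  have hr0 : 0 ≤ r := div_nonneg (by linarith) h1q.le
  have hr1 : r ≤ 1 := div_le_one_of_le₀ (by linarith) h1q.le
  have hmul : (1 - q) * r = 1 - q' := mul_div_cancel₀ _ h1q.ne'
  have hμ := hP (1 - q) ⟨by linarith, by linarith⟩
  have hν := hP r ⟨hr0, hr1⟩
  have hξ : IsBernoulli ((1 - q) * r) (P (1 - q')) := by
    rw [hmul]
    exact hP _ ⟨by linarith, by linarith⟩
  have key {ρ : ℝ} (hρ : P (1 - q) (RhoPerc ρ) = 1) : 1 - r + r * ρ ≤ rhoC P q' :=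
    le_csSup (bddAbove_rhoPerc P q') (measure_rhoPerc_of_thinning h1q.le hr0 hμ hν hξ hρ)
  have hzero : P (1 - q) (RhoPerc (d := d) 0) = 1 := by
    have := hμ.1
    rw [rhoPerc_zero hd, measure_univ]
  have hbound : 1 - r + r * rhoC P q ≤ rhoC P q' := by
    rcases hr0.eq_or_lt with h | h
    · have := key hzero
      rw [← h] at this ⊢
      linarith
    · have : rhoC P q ≤ (rhoC P q' - (1 - r)) / r := by
        refine csSup_le ⟨0, hzero⟩ fun ρ hρ => ?_
        rw [le_div_iff₀ h]
        linarith [key hρ]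
      rw [le_div_iff₀ h] at this
      linarith
  have hα : (q' - q) / (1 - q) = 1 - r := by
    rw [hr_def]
    field_simp
    ring
  rw [mul_div_assoc, hα]
  linarith

theorem qbar_le_one (P : ℝ → Measure (ConfigD d)) : qbar P ≤ 1 :=
  Real.sSup_le (fun _ hq => hq.1.2) zero_le_one

theorem rhoC_lt_one (hd : 1 ≤ d) (P : ℝ → Measure (ConfigD d))
    (hP : ∀ p ∈ Set.Icc (0 : ℝ) 1, IsBernoulli p (P p)) {q : ℝ} (hq : 0 ≤ q) (hqb : q < qbar P) :
    rhoC P q < 1 := by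
  have hne : {q : ℝ | q ∈ Set.Icc (0 : ℝ) 1 ∧ rhoC P q < 1}.Nonempty := by
    by_contra h
    rw [Set.not_nonempty_iff_eq_empty] at h
    rw [qbar, h, Real.sSup_empty] at hqb
    linarith
  obtain ⟨s, ⟨hs, hs1⟩, hqs⟩ := exists_lt_of_lt_csSup hne hqb
  have h := rhoC_sub_ge hd P hP hq hqs hs.2
  have : 0 ≤ (1 - rhoC P q) * (s - q) / (1 - q) :=
    div_nonneg (mul_nonneg (by linarith [rhoC_le_one P q]) (by linarith)) (by linarith [hs.2])
  linarith

end Density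

/-- Strict monotonicity of the critical density of `ρ`-percolation:
for `0 ≤ q < q' ≤ q̄ := sup{q ∈ [0,1] | ρ_c(q) < 1}` one has
`ρ_c(q') − ρ_c(q) ≥ (1 − ρ_c(q))·(q'−q)/(1−q)`; in particular `ρ_c` is strictly
increasing on `[0, q̄]`. -/
theorem rhoC_strictly_increasing
    {d : ℕ} (hd : 1 ≤ d)
    (P : ℝ → Measure (ConfigD d)) (hP : ∀ p ∈ Set.Icc (0 : ℝ) 1, IsBernoulli p (P p)) :
    (∀ q q' : ℝ, 0 ≤ q → q < q' → q' ≤ qbar P →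
      (1 - rhoC P q) * (q' - q) / (1 - q) ≤ rhoC P q' - rhoC P q) ∧
    StrictMonoOn (rhoC P) (Set.Icc 0 (qbar P)) := by
  refine ⟨fun q q' hq hqq' hq' => rhoC_sub_ge hd P hP hq hqq' (hq'.trans (qbar_le_one P)), ?_⟩
  intro q hq q' hq' hqq'
  have h1 := hq'.2.trans (qbar_le_one P)
  have h := rhoC_sub_ge hd P hP hq.1 hqq' h1
  have hlt := rhoC_lt_one hd P hP hq.1 (hqq'.trans_le hq'.2)
  have : 0 < (1 - rhoC P q) * (q' - q) / (1 - q) :=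
    div_pos (mul_pos (by linarith) (by linarith)) (by linarith)
  linarith
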